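/- arXiv:0805.0844 — 8 statements merged into one kernel-verified Lean document; each statement's English description precedes it below -/
import Mathlib

section
/- For every real s > n the integral ∫₀^∞ F(t)·t^(s−1) dt converges absolutely, and Γ(s)⁻¹·∫₀^∞ F(t)·t^(s−1) dt = Γ(s)⁻¹·( ∫₀¹ (F(t) − Σ_{k=1}^n a_k·t^(−k) − a₀)·t^(s−1) dt + a₀/s + Σ_{k=1}^n a_k/(s−k) + ∫₁^∞ F(t)·t^(s−1) dt ). In particular the function ζ_F defined on (0,1) by the right-hand side is the continuation to (0,1) of the zeta function s ↦ Γ(s)⁻¹·∫₀^∞ F(t)·t^(s−1) dt initially defined for s > n. -/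
/-!
Split the half-line at `t = 1`. On `(1, ∞)` the integrand is dominated by
`C * t ^ (s - 1) * exp (-δ * t)`, which is integrable because `s > 0`. On `(0, 1]` write `F` as the
remainder `F t - ∑ a k * t ^ (-k) - a 0` plus its singular part: the remainder is dominated by
`C * t`, while each term of the singular part contributes a power integral
`∫₀¹ t ^ (r - 1) dt = 1 / r` with `r = s - k` or `r = s`, positive since `s > n`.
-/

open MeasureTheory Set

lemma integrableOn_Ioc_rpow_sub_one {r : ℝ} (hr : 0 < r) :
    IntegrableOn (fun t : ℝ => t ^ (r - 1)) (Ioc 0 1) :=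
  (intervalIntegrable_iff_integrableOn_Ioc_of_le zero_le_one).1
    (intervalIntegral.intervalIntegrable_rpow' (by linarith))

lemma integral_Ioc_rpow_sub_one {r : ℝ} (hr : 0 < r) :
    ∫ t in Ioc (0:ℝ) 1, t ^ (r - 1) = 1 / r := by
  rw [← intervalIntegral.integral_of_le zero_le_one, integral_rpow (Or.inl (by linarith))]
  simp [Real.zero_rpow hr.ne']

/-- For `F` with heat-kernel-type behaviour
(`|F(t) − Σ_{k=1}^n a_k t^{-k} − a₀| ≤ C t` near `0` and exponential decay at `∞`),
for every real `s > n` the Mellin-type integral `∫₀^∞ F(t) t^(s−1) dt` converges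
absolutely and equals the decomposition defining the continued zeta function. -/
theorem mellin_decomposition_of_heat_trace
    (n : ℕ) (a : ℕ → ℝ) (C δ : ℝ) (hC : 0 < C) (hδ : 0 < δ)
    (F : ℝ → ℝ) (hF : ContinuousOn F (Ioi 0))
    (h0 : ∀ t ∈ Ioc (0:ℝ) 1,
      |F t - (∑ k ∈ Finset.Icc 1 n, a k * t ^ (-(k:ℝ))) - a 0| ≤ C * t)
    (hinf : ∀ t : ℝ, 1 ≤ t → |F t| ≤ C * Real.exp (-δ * t)) :
    ∀ s : ℝ, (n : ℝ) < s →
      IntegrableOn (fun t => F t * t ^ (s - 1)) (Ioi 0) ∧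
      (Real.Gamma s)⁻¹ * (∫ t in Ioi (0:ℝ), F t * t ^ (s - 1)) =
        (Real.Gamma s)⁻¹ *
          ((∫ t in Ioc (0:ℝ) 1,
              (F t - (∑ k ∈ Finset.Icc 1 n, a k * t ^ (-(k:ℝ))) - a 0) * t ^ (s - 1)) +
            a 0 / s + (∑ k ∈ Finset.Icc 1 n, a k / (s - k)) +
            ∫ t in Ioi (1:ℝ), F t * t ^ (s - 1)) := by
  intro s hs
  have hs0 : 0 < s := lt_of_le_of_lt (Nat.cast_nonneg n) hs
  have hpow : ContinuousOn (fun t : ℝ => t ^ (s - 1)) (Ioi 0) := fun t ht =>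
    (Real.continuousAt_rpow_const t _ (Or.inl (ne_of_gt ht))).continuousWithinAt
  have hsk : ∀ k ∈ Finset.Icc 1 n, 0 < s - k := fun k hk => by
    have : (k : ℝ) ≤ n := by exact_mod_cast (Finset.mem_Icc.1 hk).2
    linarith
  have htail : IntegrableOn (fun t => F t * t ^ (s - 1)) (Ioi 1) := by
    have hdom : IntegrableOn (fun t : ℝ => C * (t ^ (s - 1) * Real.exp (-δ * t ^ (1:ℝ))))
        (Ioi 1) :=
      ((integrableOn_rpow_mul_exp_neg_mul_rpow (by linarith) one_pos hδ).mono_set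
        (Ioi_subset_Ioi zero_le_one)).const_mul C
    refine Integrable.mono' hdom
      (((hF.mul hpow).mono (Ioi_subset_Ioi zero_le_one)).aestronglyMeasurable measurableSet_Ioi) ?_
    refine (ae_restrict_iff' measurableSet_Ioi).2 (.of_forall fun t ht => ?_)
    have ht1 : (1:ℝ) < t := ht
    have hp : 0 ≤ t ^ (s - 1) := Real.rpow_nonneg (by linarith) _
    rw [Real.norm_eq_abs, abs_mul, abs_of_nonneg hp, Real.rpow_one]
    calc |F t| * t ^ (s - 1) ≤ (C * Real.exp (-δ * t)) * t ^ (s - 1) := by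
          gcongr; exact hinf t ht1.le
      _ = _ := by ring
  have hrem : IntegrableOn (fun t =>
      (F t - (∑ k ∈ Finset.Icc 1 n, a k * t ^ (-(k:ℝ))) - a 0) * t ^ (s - 1)) (Ioc 0 1) := by
    have hdom : IntegrableOn (fun t : ℝ => C * t ^ (s + 1 - 1)) (Ioc 0 1) :=
      (integrableOn_Ioc_rpow_sub_one (by linarith)).const_mul C
    have hsum : ContinuousOn (fun t : ℝ => ∑ k ∈ Finset.Icc 1 n, a k * t ^ (-(k:ℝ))) (Ioi 0) :=
      continuousOn_finsetSum _ fun k _ => continuousOn_const.mul fun t ht =>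
        (Real.continuousAt_rpow_const t _ (Or.inl (ne_of_gt ht))).continuousWithinAt
    refine Integrable.mono' hdom
      (((((hF.sub hsum).sub continuousOn_const).mul hpow).mono
        Ioc_subset_Ioi_self).aestronglyMeasurable measurableSet_Ioc) ?_
    refine (ae_restrict_iff' measurableSet_Ioc).2 (.of_forall fun t ht => ?_)
    have hp : 0 ≤ t ^ (s - 1) := Real.rpow_nonneg ht.1.le _
    rw [Real.norm_eq_abs, abs_mul, abs_of_nonneg hp]
    calc _ ≤ (C * t) * t ^ (s - 1) := by gcongr; exact h0 t ht
      _ = C * t ^ (s + 1 - 1) := by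
          rw [show s + 1 - 1 = 1 + (s - 1) by ring, Real.rpow_add ht.1, Real.rpow_one]; ring
  have hterm : ∀ k ∈ Finset.Icc 1 n,
      IntegrableOn (fun t : ℝ => a k * t ^ (s - k - 1)) (Ioc 0 1) := fun k hk =>
    (integrableOn_Ioc_rpow_sub_one (hsk k hk)).const_mul _
  have hsing : IntegrableOn (fun t : ℝ => ∑ k ∈ Finset.Icc 1 n, a k * t ^ (s - k - 1))
      (Ioc 0 1) := integrable_finsetSum _ hterm
  have hconst : IntegrableOn (fun t : ℝ => a 0 * t ^ (s - 1)) (Ioc 0 1) :=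
    (integrableOn_Ioc_rpow_sub_one hs0).const_mul _
  have hdecomp : EqOn (fun t => F t * t ^ (s - 1)) (fun t =>
      ((F t - (∑ k ∈ Finset.Icc 1 n, a k * t ^ (-(k:ℝ))) - a 0) * t ^ (s - 1)
        + a 0 * t ^ (s - 1)) + ∑ k ∈ Finset.Icc 1 n, a k * t ^ (s - k - 1)) (Ioc 0 1) := by
    intro t ht
    have : ∑ k ∈ Finset.Icc 1 n, a k * t ^ (s - k - 1)
        = (∑ k ∈ Finset.Icc 1 n, a k * t ^ (-(k:ℝ))) * t ^ (s - 1) := by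
      rw [Finset.sum_mul]
      refine Finset.sum_congr rfl fun k _ => ?_
      rw [mul_assoc, ← Real.rpow_add ht.1]
      congr 2; ring
    simp only [this]
    ring
  have hhead : IntegrableOn (fun t => F t * t ^ (s - 1)) (Ioc 0 1) :=
    IntegrableOn.congr_fun ((hrem.add hconst).add hsing) hdecomp.symm measurableSet_Ioc
  have hunion : Ioc (0:ℝ) 1 ∪ Ioi 1 = Ioi 0 := Ioc_union_Ioi_eq_Ioi zero_le_one
  refine ⟨hunion ▸ hhead.union htail, ?_⟩
  congr 1
  rw [← hunion, setIntegral_union (Ioc_disjoint_Ioi le_rfl) measurableSet_Ioi hhead htail,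
    setIntegral_congr_fun measurableSet_Ioc hdecomp, integral_add (by exact hrem.add hconst) hsing,
    integral_add hrem hconst, integral_finsetSum _ hterm, integral_const_mul,
    integral_Ioc_rpow_sub_one hs0, mul_one_div]
  congr 2
  refine Finset.sum_congr rfl fun k hk => ?_
  rw [integral_const_mul, integral_Ioc_rpow_sub_one (hsk k hk), mul_one_div]
end

section
/- The limit of ζ_F(s) as s → 0⁺ exists and equals a₀; that is, the value at s = 0 of the continued zeta function of F equals the constant term of the short-time expansion of F. -/
open MeasureTheory Set Filter

/-!
Since `1 / Γ(s) = s / Γ(s + 1)`, the zeta function equals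
`Γ(s + 1)⁻¹ * (s * I₀(s) + a₀ + s * P(s) + s * I₁(s))`, where `I₀`, `I₁` are the two integrals and
`P` is the finite sum of pole terms. Both integrals are bounded uniformly in `s ∈ (0, 1)`
(`abs_integral_near_zero_le`, `abs_integral_near_infty_le`) and `P` is continuous at `0`, so as
`s → 0⁺` only `a₀ / Γ(1) = a₀` survives.
-/

lemma abs_integral_near_zero_le {G : ℝ → ℝ} {C s : ℝ} (hC : 0 < C) (hs : 0 < s)
    (hG : ∀ t ∈ Ioc (0:ℝ) 1, |G t| ≤ C * t) :
    |∫ t in Ioc (0:ℝ) 1, G t * t ^ (s - 1)| ≤ C := by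
  have h := norm_setIntegral_le_of_norm_le_const (μ := volume) (s := Ioc (0:ℝ) 1)
    (f := fun t => G t * t ^ (s - 1)) (C := C) (by simp) (fun t ht => ?_)
  · simpa using h
  · have hpos : 0 < t ^ (s - 1) := Real.rpow_pos_of_pos ht.1 _
    rw [Real.norm_eq_abs, abs_mul, abs_of_pos hpos]
    calc |G t| * t ^ (s - 1) ≤ C * t * t ^ (s - 1) := by gcongr; exact hG t ht
      _ = C * t ^ s := by rw [Real.rpow_sub_one ht.1.ne']; field_simp [ht.1.ne']
      _ ≤ C * 1 := by gcongr; exact Real.rpow_le_one ht.1.le ht.2 hs.le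
      _ = C := mul_one C

lemma abs_integral_near_infty_le {F : ℝ → ℝ} {C δ s : ℝ} (hδ : 0 < δ) (hs : s < 1)
    (hF : ∀ t : ℝ, 1 ≤ t → |F t| ≤ C * Real.exp (-δ * t)) :
    |∫ t in Ioi (1:ℝ), F t * t ^ (s - 1)| ≤ ∫ t in Ioi (1:ℝ), C * Real.exp (-δ * t) := by
  rw [← Real.norm_eq_abs]
  refine norm_integral_le_of_norm_le ((exp_neg_integrableOn_Ioi 1 hδ).const_mul C) ?_
  filter_upwards [ae_restrict_mem measurableSet_Ioi] with t ht
  have ht1 : (1:ℝ) ≤ t := le_of_lt ht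
  rw [Real.norm_eq_abs, abs_mul, abs_of_nonneg (Real.rpow_nonneg (by linarith) _)]
  exact (mul_le_of_le_one_right (abs_nonneg _)
    (Real.rpow_le_one_of_one_le_of_nonpos ht1 (by linarith))).trans (hF t ht1)

lemma tendsto_mul_of_abs_le {f : ℝ → ℝ} {B : ℝ} (h : ∀ s ∈ Ioo (0:ℝ) 1, |f s| ≤ B) :
    Tendsto (fun s => s * f s) (nhdsWithin 0 (Ioi 0)) (nhds 0) := by
  have hid : Tendsto (fun s : ℝ => s * B) (nhdsWithin 0 (Ioi 0)) (nhds 0) := by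
    have : Tendsto (fun s : ℝ => s * B) (nhds 0) (nhds (0 * B)) :=
      (continuous_id.mul continuous_const).tendsto 0
    rw [zero_mul] at this
    exact this.mono_left nhdsWithin_le_nhds
  refine squeeze_zero_norm' ?_ hid
  filter_upwards [Ioo_mem_nhdsGT (zero_lt_one' ℝ)] with s hs
  rw [Real.norm_eq_abs, abs_mul, abs_of_pos hs.1]
  exact mul_le_mul_of_nonneg_left (h s hs) hs.1.le

/-- the continued zeta function `ζ_F(s)` of a heat-kernel-type trace `F`
tends, as `s → 0⁺`, to the constant term `a₀` of the short-time expansion of `F`. -/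
theorem zeta_tendsto_constant_term
    (n : ℕ) (a : ℕ → ℝ) (C δ : ℝ) (hC : 0 < C) (hδ : 0 < δ)
    (F : ℝ → ℝ) (hF : ContinuousOn F (Ioi 0))
    (h0 : ∀ t ∈ Ioc (0:ℝ) 1,
      |F t - (∑ k ∈ Finset.Icc 1 n, a k * t ^ (-(k:ℝ))) - a 0| ≤ C * t)
    (hinf : ∀ t : ℝ, 1 ≤ t → |F t| ≤ C * Real.exp (-δ * t)) :
    Tendsto (fun s : ℝ =>
        (Real.Gamma s)⁻¹ *
          ((∫ t in Ioc (0:ℝ) 1,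
              (F t - (∑ k ∈ Finset.Icc 1 n, a k * t ^ (-(k:ℝ))) - a 0) * t ^ (s - 1)) +
            a 0 / s + (∑ k ∈ Finset.Icc 1 n, a k / (s - k)) +
            ∫ t in Ioi (1:ℝ), F t * t ^ (s - 1)))
      (nhdsWithin 0 (Ioi 0)) (nhds (a 0)) := by
  have hI0 := tendsto_mul_of_abs_le fun s hs => abs_integral_near_zero_le hC hs.1 h0
  have hI1 := tendsto_mul_of_abs_le fun s hs => abs_integral_near_infty_le hδ hs.2 hinf
  have hP : Tendsto (fun s : ℝ => s * ∑ k ∈ Finset.Icc 1 n, a k / (s - k))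
      (nhdsWithin 0 (Ioi 0)) (nhds 0) := by
    have hcont : ContinuousAt (fun s : ℝ => s * ∑ k ∈ Finset.Icc 1 n, a k / (s - k)) 0 := by
      refine continuousAt_id.mul (tendsto_finsetSum _ fun k hk => ?_)
      have hk0 : (0:ℝ) - k ≠ 0 := by
        have := (Finset.mem_Icc.mp hk).1
        simp; omega
      exact (continuousAt_const.div (continuousAt_id.sub continuousAt_const) hk0)
    have := hcont.tendsto
    rw [zero_mul] at this
    exact this.mono_left nhdsWithin_le_nhds
  have hΓ : Tendsto (fun s : ℝ => (Real.Gamma (s + 1))⁻¹)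
      (nhdsWithin 0 (Ioi 0)) (nhds 1) := by
    have hc : ContinuousAt Real.Gamma (0 + 1) := by
      refine (Real.differentiableAt_Gamma fun m => ?_).continuousAt
      have : (0:ℝ) ≤ m := m.cast_nonneg
      linarith
    have h1 : ContinuousAt (fun s : ℝ => Real.Gamma (s + 1)) 0 :=
      ContinuousAt.comp (f := fun s : ℝ => s + 1) hc (by fun_prop)
    have h2 := (h1.inv₀ (by simp)).tendsto
    simp only [Pi.inv_apply, zero_add, Real.Gamma_one, inv_one] at h2
    exact h2.mono_left nhdsWithin_le_nhds
  have key := hΓ.mul (((hI0.add_const (a 0)).add hP).add hI1)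
  simp only [zero_add, add_zero, one_mul] at key
  refine key.congr' ?_
  filter_upwards [self_mem_nhdsWithin] with s hs
  have hs0 : s ≠ 0 := (mem_Ioi.mp hs).ne'
  have hg : Real.Gamma s ≠ 0 := (Real.Gamma_pos_of_pos hs).ne'
  rw [Real.Gamma_add_one hs0, mul_inv]
  -- The integrals and the sum are kept opaque so that only `s` and `Γ(s)` are cleared.
  generalize (∫ t in Ioc (0:ℝ) 1,
    (F t - (∑ k ∈ Finset.Icc 1 n, a k * t ^ (-(k:ℝ))) - a 0) * t ^ (s - 1)) = I₀
  generalize (∫ t in Ioi (1:ℝ), F t * t ^ (s - 1)) = I₁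
  generalize (∑ k ∈ Finset.Icc 1 n, a k / (s - k)) = P
  field_simp
end

section
/- The limit of (ζ_F(s) − a₀)/s as s → 0⁺ exists and equals γ·a₀ − Σ_{k=1}^n a_k/k + ∫₀¹ (F(t) − Σ_{k=1}^n a_k·t^(−k) − a₀)·t^(−1) dt + ∫₁^∞ F(t)·t^(−1) dt, where γ is the Euler–Mascheroni constant. (This is the explicit formula, used in the paper to bound regularized determinants, expressing the derivative at 0 of the continued zeta function of F in terms of the Euler constant, the coefficients of the short-time expansion of F, and the two convergent integrals ψ₁ and ψ₂.) -/
/-!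
Since `1 / Γ(s) = s / Γ(1 + s)` for `s > 0`, the quotient `(ζ_F(s) - a₀) / s` equals
`Γ(1 + s)⁻¹ * (I₁(s) + Σ a_k / (s - k) + I₂(s)) + a₀ * (Γ(1 + s)⁻¹ - 1) / s`, where `I₁`, `I₂` are
the integrals over `(0, 1]` and `(1, ∞)`. The last term is a difference quotient of `1 / Γ` at `1`
and tends to `γ * a₀`, because `Γ'(1) = -γ`. Everything else is continuous at `s = 0⁺`; for the
integrals this is dominated convergence, with the dominating functions `C` on `(0, 1]` (the
remainder `O(t)` absorbs `t ^ (s - 1)`) and `C * exp (-δ * t)` on `(1, ∞)` (where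
`t ^ (s - 1) ≤ 1` for `s ≤ 1`).
-/

open MeasureTheory Set Filter

/-- Dominated convergence for the part of the Mellin transform near `0`. -/
lemma tendsto_integral_Ioc_mul_rpow {C : ℝ} {G : ℝ → ℝ} (hG : ContinuousOn G (Ioi 0))
    (hb : ∀ t ∈ Ioc (0:ℝ) 1, |G t| ≤ C * t) :
    Tendsto (fun s : ℝ => ∫ t in Ioc (0:ℝ) 1, G t * t ^ (s - 1)) (nhdsWithin 0 (Ioi 0))
      (nhds (∫ t in Ioc (0:ℝ) 1, G t * t⁻¹)) := by
  refine tendsto_integral_filter_of_dominated_convergence (fun _ => C) ?_ ?_ ?_ ?_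
  · refine Eventually.of_forall fun s => ?_
    refine ContinuousOn.aestronglyMeasurable ?_ measurableSet_Ioc
    refine (hG.mono fun t ht => ht.1).mul fun t ht => ?_
    exact (Real.continuousAt_rpow_const t _ (Or.inl ht.1.ne')).continuousWithinAt
  · filter_upwards [self_mem_nhdsWithin] with s (hs : 0 < s)
    filter_upwards [ae_restrict_mem measurableSet_Ioc] with t ht
    have hC : 0 ≤ C := by
      have := (abs_nonneg _).trans (hb 1 ⟨one_pos, le_rfl⟩)
      linarith
    have hp : t * t ^ (s - 1) = t ^ s := by
      rw [Real.rpow_sub_one ht.1.ne']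
      field_simp [ht.1.ne']
    have hpos : 0 ≤ t ^ (s - 1) := Real.rpow_nonneg ht.1.le _
    rw [Real.norm_eq_abs, abs_mul, abs_of_nonneg hpos]
    calc |G t| * t ^ (s - 1) ≤ C * t * t ^ (s - 1) := by gcongr; exact hb t ht
      _ = C * t ^ s := by rw [mul_assoc, hp]
      _ ≤ C * 1 := by gcongr; exact Real.rpow_le_one ht.1.le ht.2 hs.le
      _ = C := mul_one C
  · exact integrableOn_const (by simp)
  · filter_upwards [ae_restrict_mem measurableSet_Ioc] with t ht
    have h : ContinuousAt (fun s : ℝ => G t * t ^ (s - 1)) 0 :=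
      continuousAt_const.mul (ContinuousAt.rpow continuousAt_const (by fun_prop)
        (Or.inl ht.1.ne'))
    have h' := h.tendsto.mono_left (nhdsWithin_le_nhds (s := Ioi 0))
    simpa [Real.rpow_neg_one] using h'

/-- Dominated convergence for the part of the Mellin transform near `∞`. -/
lemma tendsto_integral_Ioi_mul_rpow {C δ : ℝ} (hδ : 0 < δ) {F : ℝ → ℝ}
    (hF : ContinuousOn F (Ioi 0)) (hb : ∀ t : ℝ, 1 ≤ t → |F t| ≤ C * Real.exp (-δ * t)) :
    Tendsto (fun s : ℝ => ∫ t in Ioi (1:ℝ), F t * t ^ (s - 1)) (nhdsWithin 0 (Ioi 0))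
      (nhds (∫ t in Ioi (1:ℝ), F t * t⁻¹)) := by
  have hpos : ∀ t ∈ Ioi (1:ℝ), 0 < t := fun t ht => one_pos.trans ht
  refine tendsto_integral_filter_of_dominated_convergence
    (fun t => C * Real.exp (-δ * t)) ?_ ?_ ?_ ?_
  · refine Eventually.of_forall fun s => ?_
    refine ContinuousOn.aestronglyMeasurable ?_ measurableSet_Ioi
    refine (hF.mono hpos).mul fun t ht => ?_
    exact (Real.continuousAt_rpow_const t _ (Or.inl (hpos t ht).ne')).continuousWithinAt
  · have h1 : ∀ᶠ s : ℝ in nhdsWithin 0 (Ioi 0), s < 1 :=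
      (eventually_lt_nhds one_pos).filter_mono nhdsWithin_le_nhds
    filter_upwards [h1] with s hs
    filter_upwards [ae_restrict_mem measurableSet_Ioi] with t ht
    rw [Real.norm_eq_abs, abs_mul, abs_of_nonneg (Real.rpow_nonneg (hpos t ht).le _)]
    calc |F t| * t ^ (s - 1) ≤ |F t| * 1 := by
          gcongr
          exact Real.rpow_le_one_of_one_le_of_nonpos (le_of_lt ht) (by linarith)
      _ ≤ C * Real.exp (-δ * t) := by rw [mul_one]; exact hb t (le_of_lt ht)
  · exact (exp_neg_integrableOn_Ioi 1 hδ).const_mul C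
  · filter_upwards [ae_restrict_mem measurableSet_Ioi] with t ht
    have h : ContinuousAt (fun s : ℝ => F t * t ^ (s - 1)) 0 :=
      continuousAt_const.mul (ContinuousAt.rpow continuousAt_const (by fun_prop)
        (Or.inl (hpos t ht).ne'))
    have h' := h.tendsto.mono_left (nhdsWithin_le_nhds (s := Ioi 0))
    simpa [Real.rpow_neg_one] using h'

/-- The derivative of `1 / Γ` at `1` is `γ`. -/
lemma tendsto_inv_Gamma_slope :
    Tendsto (fun s : ℝ => ((Real.Gamma (s + 1))⁻¹ - 1) / s) (nhdsWithin 0 (Ioi 0))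
      (nhds Real.eulerMascheroniConstant) := by
  have h : HasDerivAt (fun x => (Real.Gamma x)⁻¹) Real.eulerMascheroniConstant 1 := by
    have := Real.hasDerivAt_Gamma_one.fun_inv (by simp)
    simpa using this
  have h' := h.tendsto_slope_zero_right
  simpa [add_comm, div_eq_inv_mul] using h'

/-- the derivative at `0` of the continued zeta function of `F`:
`(ζ_F(s) − a₀)/s → γ·a₀ − Σ_{k=1}^n a_k/k + ψ₁ + ψ₂` as `s → 0⁺`, where
`ψ₁ = ∫₀¹ (F(t) − Σ a_k t^{-k} − a₀) t⁻¹ dt` and `ψ₂ = ∫₁^∞ F(t) t⁻¹ dt`. -/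
theorem zeta_derivative_at_zero
    (n : ℕ) (a : ℕ → ℝ) (C δ : ℝ) (hC : 0 < C) (hδ : 0 < δ)
    (F : ℝ → ℝ) (hF : ContinuousOn F (Ioi 0))
    (h0 : ∀ t ∈ Ioc (0:ℝ) 1,
      |F t - (∑ k ∈ Finset.Icc 1 n, a k * t ^ (-(k:ℝ))) - a 0| ≤ C * t)
    (hinf : ∀ t : ℝ, 1 ≤ t → |F t| ≤ C * Real.exp (-δ * t)) :
    Tendsto (fun s : ℝ =>
        ((Real.Gamma s)⁻¹ *
            ((∫ t in Ioc (0:ℝ) 1,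
                (F t - (∑ k ∈ Finset.Icc 1 n, a k * t ^ (-(k:ℝ))) - a 0) * t ^ (s - 1)) +
              a 0 / s + (∑ k ∈ Finset.Icc 1 n, a k / (s - k)) +
              ∫ t in Ioi (1:ℝ), F t * t ^ (s - 1)) - a 0) / s)
      (nhdsWithin 0 (Ioi 0))
      (nhds (Real.eulerMascheroniConstant * a 0 - (∑ k ∈ Finset.Icc 1 n, a k / k) +
        (∫ t in Ioc (0:ℝ) 1,
          (F t - (∑ k ∈ Finset.Icc 1 n, a k * t ^ (-(k:ℝ))) - a 0) * t⁻¹) +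
        ∫ t in Ioi (1:ℝ), F t * t⁻¹)) := by
  have hG : ContinuousOn (fun t => F t - (∑ k ∈ Finset.Icc 1 n, a k * t ^ (-(k:ℝ))) - a 0)
      (Ioi 0) := by
    refine (hF.sub (continuousOn_finsetSum _ fun k _ => ?_)).sub continuousOn_const
    exact continuousOn_const.mul fun t ht =>
      (Real.continuousAt_rpow_const t _ (Or.inl (ne_of_gt ht))).continuousWithinAt
  have hI1 := tendsto_integral_Ioc_mul_rpow hG h0
  have hI2 := tendsto_integral_Ioi_mul_rpow hδ hF hinf
  have hS : Tendsto (fun s : ℝ => ∑ k ∈ Finset.Icc 1 n, a k / (s - k)) (nhdsWithin 0 (Ioi 0))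
      (nhds (-∑ k ∈ Finset.Icc 1 n, a k / k)) := by
    rw [← Finset.sum_neg_distrib]
    refine tendsto_finsetSum _ fun k hk => ?_
    have hk0 : (k:ℝ) ≠ 0 := by
      have := (Finset.mem_Icc.mp hk).1
      positivity
    have h : ContinuousAt (fun s : ℝ => a k / (s - k)) 0 :=
      continuousAt_const.div (by fun_prop) (by simpa using hk0)
    have h' := h.tendsto.mono_left (nhdsWithin_le_nhds (s := Ioi 0))
    simpa [div_neg] using h'
  have hg : Tendsto (fun s : ℝ => (Real.Gamma (s + 1))⁻¹) (nhdsWithin 0 (Ioi 0)) (nhds 1) := by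
    have h : ContinuousAt (fun s : ℝ => (Real.Gamma (s + 1))⁻¹) 0 := by
      refine ContinuousAt.inv₀ (ContinuousAt.comp (g := Real.Gamma) ?_ (by fun_prop)) (by simp)
      simpa using Real.hasDerivAt_Gamma_one.continuousAt
    simpa using h.tendsto.mono_left (nhdsWithin_le_nhds (s := Ioi 0))
  have key := (hg.mul ((hI1.add hS).add hI2)).add (tendsto_inv_Gamma_slope.mul_const (a 0))
  refine (key.congr' ?_).trans (le_of_eq ?_)
  · filter_upwards [self_mem_nhdsWithin] with s (hs : 0 < s)
    have hΓ : Real.Gamma s ≠ 0 := (Real.Gamma_pos_of_pos hs).ne'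
    rw [Real.Gamma_add_one hs.ne']
    field_simp
    ring
  · congr 1
    ring
end

section
/- Let c₀ ∈ ℂ, C > 0, and let f : (0,1] → ℂ be continuous with |f(t) − c₀| ≤ C·t for all t ∈ (0,1]. Then lim_{s→0⁺} (s/Γ(s)) · ∫₀¹ f(t)·t^(s−1) dt = 0. (This is the key step in the paper's proof that the coefficient a₀ of the short-time heat-kernel expansion is constant on the moduli space: after integration by parts, the τ-derivative of the zeta function at s = 0 is of this form and hence vanishes.) -/
/-!
On `(0, 1]` the function `f` is bounded by `M = ‖c₀‖ + C`, so the integral has norm at most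
`M * ∫₀¹ t ^ (s - 1) dt = M / s`. After multiplication by `s / Γ(s)` what remains is bounded by
`M / Γ(s) = M * s / Γ(s + 1)`, which tends to `0` because `Γ` is continuous at `1` with `Γ(1) = 1`.
-/

open MeasureTheory Set Filter

/-- if `f : (0,1] → ℂ` is continuous with `|f(t) − c₀| ≤ C t`, then
`(s/Γ(s)) · ∫₀¹ f(t) t^(s−1) dt → 0` as `s → 0⁺`. -/
theorem s_div_Gamma_mul_mellin_tendsto_zero
    (c₀ : ℂ) (C : ℝ) (hC : 0 < C) (f : ℝ → ℂ)
    (hf : ContinuousOn f (Ioc 0 1))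
    (hbound : ∀ t ∈ Ioc (0:ℝ) 1, ‖f t - c₀‖ ≤ C * t) :
    Tendsto (fun s : ℝ =>
        ((s / Real.Gamma s : ℝ) : ℂ) * ∫ t in Ioc (0:ℝ) 1, f t * ((t ^ (s - 1) : ℝ) : ℂ))
      (nhdsWithin 0 (Ioi 0)) (nhds 0) := by
  have hM : ∀ t ∈ Ioc (0:ℝ) 1, ‖f t‖ ≤ ‖c₀‖ + C := fun t ht => by
    have h1 := hbound t ht
    have h2 : ‖f t‖ ≤ ‖c₀‖ + ‖f t - c₀‖ := norm_le_insert' (f t) c₀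
    nlinarith [ht.2]
  have hint : ∀ s : ℝ, 0 < s →
      ‖∫ t in Ioc (0:ℝ) 1, f t * ((t ^ (s - 1) : ℝ) : ℂ)‖ ≤ (‖c₀‖ + C) / s := fun s hs => by
    have hI : IntegrableOn (fun t : ℝ => t ^ (s - 1)) (Ioc 0 1) :=
      (intervalIntegrable_iff_integrableOn_Ioc_of_le zero_le_one).1
        (intervalIntegral.intervalIntegrable_rpow' (by linarith))
    have hval : ∫ t in Ioc (0:ℝ) 1, (‖c₀‖ + C) * t ^ (s - 1) = (‖c₀‖ + C) / s := by
      rw [integral_const_mul, ← intervalIntegral.integral_of_le zero_le_one,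
        integral_rpow (Or.inl (by linarith))]
      simp [Real.zero_rpow hs.ne', div_eq_mul_inv]
    rw [← hval]
    refine norm_integral_le_of_norm_le (hI.const_mul _) ?_
    filter_upwards [ae_restrict_mem measurableSet_Ioc] with t ht
    have hp : 0 ≤ t ^ (s - 1) := Real.rpow_nonneg ht.1.le _
    rw [norm_mul, Complex.norm_real, Real.norm_of_nonneg hp]
    exact mul_le_mul_of_nonneg_right (hM t ht) hp
  have hlim : Tendsto (fun s : ℝ => (‖c₀‖ + C) * (s / Real.Gamma (s + 1)))
      (nhdsWithin 0 (Ioi 0)) (nhds 0) := by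
    have hG : ContinuousAt (fun s : ℝ => Real.Gamma (s + 1)) 0 := by
      refine ContinuousAt.comp (g := Real.Gamma) ?_ (by fun_prop)
      exact (Real.differentiableAt_Gamma fun m => by
        have : (0:ℝ) ≤ m := m.cast_nonneg
        linarith).continuousAt
    have hq : ContinuousAt (fun s : ℝ => (‖c₀‖ + C) * (s / Real.Gamma (s + 1))) 0 :=
      continuousAt_const.mul (continuousAt_id.div hG (by simp))
    simpa using hq.tendsto.mono_left nhdsWithin_le_nhds
  refine squeeze_zero_norm' ?_ hlim
  filter_upwards [self_mem_nhdsWithin] with s hs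
  have hs : 0 < s := hs
  have hΓ := Real.Gamma_pos_of_pos hs
  rw [norm_mul, Complex.norm_real, Real.norm_of_nonneg (by positivity), Real.Gamma_add_one hs.ne']
  calc s / Real.Gamma s * _ ≤ s / Real.Gamma s * ((‖c₀‖ + C) / s) :=
        mul_le_mul_of_nonneg_left (hint s hs) (by positivity)
    _ = (‖c₀‖ + C) * (s / (s * Real.Gamma s)) := by field_simp
end

section
/- Let A be an element of the principal congruence subgroup Γ(2) of SL(2,ℤ), i.e. A ≡ I (mod 2), and let τ be a point of the upper half-plane ℍ on which SL(2,ℤ) acts by Möbius transformations. If A·τ = τ, then A = I or A = −I. In other words, Γ(2) modulo its center {±I} acts on ℍ without fixed points. -/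
/-!
Write `A = (a b; c d)` and `τ = x + iy`. Separating `aτ + b = τ(cτ + d)` into real and imaginary
parts and using `ad - bc = 1` gives `(a + d)² + 4c²y² = 4`. For `A ≡ I mod 2`, the determinant
condition forces the trace to satisfy `a + d ≡ 2 mod 4`, so `(a + d)² ≥ 4`. Hence `c = 0`, and then
`a = d`, `b = 0` and `a² = 1`.
-/

/-- Real and imaginary parts of the fixed-point equation `aτ + b = τ(cτ + d)`, the imaginary part
being divided by `Im τ ≠ 0`. -/
lemma fixed_point_equations (A : Matrix.SpecialLinearGroup (Fin 2) ℤ)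
    (τ : UpperHalfPlane) (hfix : A • τ = τ) :
    (A 0 0 : ℝ) - A 1 1 = 2 * A 1 0 * τ.re ∧
      (A 0 1 : ℝ) = -(A 1 0 * (τ.re ^ 2 + τ.im ^ 2)) := by
  have hden : (A 1 0 : ℂ) * τ + A 1 1 ≠ 0 := by
    simpa [ModularGroup.denom_apply] using UpperHalfPlane.denom_ne_zero (A : GL (Fin 2) ℝ) τ
  have h := UpperHalfPlane.coe_specialLinearGroup_apply A τ
  rw [hfix, eq_div_iff (by simpa using hden)] at h
  have hre := congrArg Complex.re h
  have him := congrArg Complex.im h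
  simp at hre him
  have hdiff : (A 0 0 : ℝ) - A 1 1 = 2 * A 1 0 * τ.re := by
    apply mul_right_cancel₀ τ.im_ne_zero
    linarith
  refine ⟨hdiff, ?_⟩
  linear_combination -hre - τ.re * hdiff

/-- if `A ∈ Γ(2)` fixes a point `τ` of the upper half-plane, then
`A = I` or `A = −I`; i.e. `Γ(2)/{±I}` acts on `ℍ` without fixed points. -/
theorem Gamma_two_acts_freely
    (A : Matrix.SpecialLinearGroup (Fin 2) ℤ)
    (hA : A ∈ CongruenceSubgroup.Gamma 2)
    (τ : UpperHalfPlane) (hfix : A • τ = τ) :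
    (A : Matrix (Fin 2) (Fin 2) ℤ) = 1 ∨ (A : Matrix (Fin 2) (Fin 2) ℤ) = -1 := by
  obtain ⟨hdiff, hb⟩ := fixed_point_equations A τ hfix
  have hdet : A 0 0 * A 1 1 - A 0 1 * A 1 0 = 1 := by
    rw [← Matrix.det_fin_two, A.det_coe]
  have hdetR : (A 0 0 : ℝ) * A 1 1 - A 0 1 * A 1 0 = 1 := by exact_mod_cast hdet
  obtain ⟨h00, h01, h10, h11⟩ := CongruenceSubgroup.Gamma_mem.mp hA
  have hdisc : ((A 0 0 : ℝ) + A 1 1) ^ 2 + 4 * (A 1 0 * τ.im) ^ 2 = 4 := by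
    linear_combination 4 * hdetR + ((A 0 0 : ℝ) - A 1 1 + 2 * A 1 0 * τ.re) * hdiff
      + 4 * (A 1 0 : ℝ) * hb
  have htrace : 4 ≤ (A 0 0 + A 1 1) ^ 2 := by
    obtain ⟨k, hk⟩ : (2 : ℤ) ∣ A 0 0 - 1 := by
      apply (ZMod.intCast_zmod_eq_zero_iff_dvd _ 2).mp
      rw [Int.cast_sub, h00, Int.cast_one, sub_self]
    obtain ⟨l, hl⟩ : (2 : ℤ) ∣ A 1 1 - 1 := by
      apply (ZMod.intCast_zmod_eq_zero_iff_dvd _ 2).mp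
      rw [Int.cast_sub, h11, Int.cast_one, sub_self]
    obtain ⟨m, hm⟩ := (ZMod.intCast_zmod_eq_zero_iff_dvd _ 2).mp h01
    obtain ⟨n, hn⟩ := (ZMod.intCast_zmod_eq_zero_iff_dvd _ 2).mp h10
    rw [sub_eq_iff_eq_add] at hk hl
    rw [hk, hl, hm, hn] at hdet
    push_cast at hdet
    -- the determinant condition makes `k + l` even, so the trace `2 * (k + l + 1)` is nonzero
    have hkl : k + l = 2 * (m * n - k * l) := by linarith
    have hne : k + l + 1 ≠ 0 := by omega
    have hsq : 0 < (k + l + 1) ^ 2 := by positivity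
    rw [hk, hl]
    nlinarith
  have hc : A 1 0 = 0 := by
    have htraceR : (4 : ℝ) ≤ ((A 0 0 : ℝ) + A 1 1) ^ 2 := by exact_mod_cast htrace
    have hzero : ((A 1 0 : ℝ) * τ.im) ^ 2 = 0 := by
      apply le_antisymm _ (sq_nonneg _)
      linarith
    simpa [τ.im_ne_zero] using hzero
  have hb0 : A 0 1 = 0 := by simpa [hc] using hb
  have had : A 0 0 = A 1 1 := by
    have : (A 0 0 : ℝ) = A 1 1 := by simpa [hc, sub_eq_zero] using hdiff
    exact_mod_cast this
  rw [hc, had, mul_zero, sub_zero] at hdet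
  rcases mul_self_eq_one_iff.mp hdet with h | h
  · left
    ext i j
    fin_cases i <;> fin_cases j <;> simp [had, hc, hb0, h]
  · right
    ext i j
    fin_cases i <;> fin_cases j <;> simp [had, hc, hb0, h]
end

section
/- The fundamental group of ℂ ∖ {0, 1} (equivalently, of ℂP¹ − {0, 1, ∞}), based at any point, is isomorphic to the free group on two generators. -/
/-!
Write `X = ℂ ∖ {0, 1}` as the union of two open sets: the plane slit along the vertical rays going
down from `0` and `1`, and the plane slit along the rays going up. Both are contractible (push
vertically away from the slits into a half-plane), and their intersection is the disjoint union of
the three convex strips `re < 0`, `0 < re < 1` and `1 < re`. A `TwoChartCover` axiomatises such a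
situation, with overlap components labelled by `Option ι`, and for any such cover the fundamental
group is free on `ι`: the generator for `k : ι` crosses from component `none` to component `k`
through the first chart and comes back through the second one.

* The generators generate (`genHom_surjective`): subdivide a loop into pieces lying in a single
  chart and connect each subdivision point to the basepoint inside a chart; changing the chart used
  at a point of the overlap costs one generator (`cross_eq_gen`).
* There are no relations (`genHom_injective`): glue two trivial bundles with fibre the discrete
  free group along the overlap, using left multiplication by the letter attached to each component.
  The result is a covering of `X` whose monodromy along the `k`-th generator is left multiplication
  by the `k`-th letter (`monodromy_gen`), so a word acting trivially is trivial.
-/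

open Set Topology unitInterval

/-! ### Covers by two simply connected open sets -/

/-- A cover of `X` by two simply connected open sets `chart true` and `chart false`, whose overlap
has path components indexed by `Option ι`. The components are encoded by a function `label`, which
is locally constant on the overlap (its values elsewhere are irrelevant) and separates the path
components there; `pt k` is a chosen point in the component `k`. -/
structure TwoChartCover (X ι : Type*) [TopologicalSpace X] where
  chart : Bool → Set X
  isOpen_chart : ∀ i, IsOpen (chart i)
  isSimplyConnected_chart : ∀ i, IsSimplyConnected (chart i)
  cover : ∀ x, ∃ i, x ∈ chart i
  label : X → Option ι
  label_eventuallyEq : ∀ x ∈ chart true ∩ chart false, ∀ᶠ y in 𝓝 x, label y = label x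
  joinedIn : ∀ x ∈ chart true ∩ chart false, ∀ y ∈ chart true ∩ chart false,
    label x = label y → JoinedIn (chart true ∩ chart false) x y
  pt : Option ι → X
  pt_mem : ∀ k i, pt k ∈ chart i
  label_pt : ∀ k, label (pt k) = k

theorem IsSimplyConnected.mk_eq_mk {X : Type*} [TopologicalSpace X] {s : Set X}
    (hs : IsSimplyConnected s) {x y : X} {p q : Path x y} (hp : ∀ t, p t ∈ s) (hq : ∀ t, q t ∈ s) :
    Path.Homotopic.Quotient.mk p = Path.Homotopic.Quotient.mk q := by
  have := hs.simplyConnectedSpace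
  have hx : x ∈ s := by simpa using hp 0
  have hy : y ∈ s := by simpa using hp 1
  let p' : Path (⟨x, hx⟩ : s) ⟨y, hy⟩ :=
    { toFun := fun t ↦ ⟨p t, hp t⟩, source' := by simp, target' := by simp }
  let q' : Path (⟨x, hx⟩ : s) ⟨y, hy⟩ :=
    { toFun := fun t ↦ ⟨q t, hq t⟩, source' := by simp, target' := by simp }
  obtain ⟨F⟩ := SimplyConnectedSpace.paths_homotopic p' q'
  exact Path.Homotopic.Quotient.eq.mpr ⟨F.map ⟨Subtype.val, continuous_subtype_val⟩⟩

namespace TwoChartCover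

open Path.Homotopic (Quotient)

variable {X ι : Type*} [TopologicalSpace X] (C : TwoChartCover X ι)

/-- A property of homotopy classes of paths that is stable under concatenation and holds for paths
inside a single chart holds for all paths, by subdivision of the unit interval. -/
theorem path_induction {P : ∀ {x y : X}, Quotient x y → Prop}
    (trans : ∀ {x y z : X} (p : Quotient x y) (q : Quotient y z), P p → P q → P (p.trans q))
    (chart : ∀ (i : Bool) {x y : X} (p : Path x y), (∀ t, p t ∈ C.chart i) → P (.mk p))
    {x y : X} (p : Quotient x y) : P p := by
  induction p using Path.Homotopic.Quotient.ind with | mk p =>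
  obtain ⟨t, t0, tmono, ⟨n, hn⟩, ht⟩ := exists_monotone_Icc_subset_open_cover_unitInterval
    (c := fun i ↦ p ⁻¹' C.chart i) (fun i ↦ (C.isOpen_chart i).preimage p.continuous)
    (fun s _ ↦ mem_iUnion.mpr (C.cover (p s)))
  have key : ∀ m, P (.mk (p.subpath 0 (t m))) := by
    intro m
    induction m with
    | zero =>
      obtain ⟨i, hi⟩ := C.cover (p 0)
      rw [t0, Path.subpath_self]
      exact chart i _ fun _ ↦ hi
    | succ m ih =>
      obtain ⟨i, hi⟩ := ht m
      have h := trans _ _ ih (chart i (p.subpath (t m) (t (m + 1))) fun s ↦ by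
        have : p.subpath (t m) (t (m + 1)) s ∈ range (p.subpath (t m) (t (m + 1))) := ⟨s, rfl⟩
        rw [Path.range_subpath_of_le _ _ _ (tmono m.le_succ)] at this
        obtain ⟨r, hr, e⟩ := this
        rw [← e]
        exact hi hr)
      rwa [← Path.Homotopic.Quotient.mk_trans,
        Path.Homotopic.Quotient.eq.mpr ⟨Path.Homotopy.subpathTransSubpath p 0 (t m) (t (m + 1))⟩] at h
  have h := key n
  rw [hn n le_rfl, Path.subpath_zero_one] at h
  have : ∀ {a b : X} (ha : a = x) (hb : b = y), P (.mk (p.cast ha hb)) → P (.mk p) := by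
    rintro a b rfl rfl h; exact h
  exact this _ _ h

/-- The homotopy class in `X` of the paths from `x` to `y` inside the chart `i`. -/
noncomputable def arc (i : Bool) {x y : X} (hx : x ∈ C.chart i) (hy : y ∈ C.chart i) :
    Quotient x y :=
  .mk ((C.isSimplyConnected_chart i).isPathConnected.joinedIn x hx y hy).somePath

theorem mk_eq_arc (i : Bool) {x y : X} (hx : x ∈ C.chart i) (hy : y ∈ C.chart i) (p : Path x y)
    (hp : ∀ t, p t ∈ C.chart i) : Path.Homotopic.Quotient.mk p = C.arc i hx hy :=
  (C.isSimplyConnected_chart i).mk_eq_mk hp (JoinedIn.somePath_mem _)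

theorem arc_self (i : Bool) {x : X} (hx : x ∈ C.chart i) : C.arc i hx hx = .refl x :=
  (C.mk_eq_arc i hx hx (.refl x) fun _ ↦ hx).symm

theorem arc_trans (i : Bool) {x y z : X} (hx : x ∈ C.chart i) (hy : y ∈ C.chart i)
    (hz : z ∈ C.chart i) : (C.arc i hx hy).trans (C.arc i hy hz) = C.arc i hx hz := by
  rw [arc, arc, ← Path.Homotopic.Quotient.mk_trans]
  apply mk_eq_arc
  intro t
  have h := mem_range_self (f := (JoinedIn.somePath
    ((C.isSimplyConnected_chart i).isPathConnected.joinedIn x hx y hy)).trans (JoinedIn.somePath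
    ((C.isSimplyConnected_chart i).isPathConnected.joinedIn y hy z hz))) t
  rw [Path.trans_range] at h
  rcases h with ⟨s, hs⟩ | ⟨s, hs⟩ <;> rw [← hs] <;> apply JoinedIn.somePath_mem

/-- Two points in the same component of the overlap are joined by a path lying in both charts. -/
theorem arc_eq_arc {x y : X} (hx : ∀ i, x ∈ C.chart i) (hy : ∀ i, y ∈ C.chart i)
    (h : C.label x = C.label y) : C.arc true (hx true) (hy true) = C.arc false (hx _) (hy _) := by
  have J := C.joinedIn x ⟨hx _, hx _⟩ y ⟨hy _, hy _⟩ h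
  rw [← C.mk_eq_arc true _ _ J.somePath fun t ↦ (J.somePath_mem t).1,
    ← C.mk_eq_arc false _ _ J.somePath fun t ↦ (J.somePath_mem t).2]

/-- The loop that goes from component `none` to component `k` of the overlap through `chart true`
and returns through `chart false`. It is trivial for `k = none`. -/
noncomputable def gen (k : Option ι) : FundamentalGroup X (C.pt none) :=
  FundamentalGroup.fromPath <|
    (C.arc true (C.pt_mem none _) (C.pt_mem k _)).trans (C.arc false (C.pt_mem k _) (C.pt_mem none _))

theorem gen_none : C.gen none = 1 := by
  rw [gen, arc_self, arc_self]
  exact Path.Homotopic.Quotient.refl_trans _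

/-- The homomorphism from the free group sending each letter to the corresponding loop. -/
noncomputable def genHom : FreeGroup ι →* FundamentalGroup X (C.pt none) :=
  FreeGroup.lift fun k ↦ C.gen (some k)

theorem gen_mem (k : Option ι) : C.gen k ∈ C.genHom.range := by
  cases k with
  | none => rw [gen_none]; exact one_mem _
  | some k => exact ⟨FreeGroup.of k, by simp [genHom]⟩

/-- Going to a point `x` of the overlap in one chart and returning in the other only depends on the
component of `x`. -/
theorem cross_eq_gen {x : X} (hx : ∀ i, x ∈ C.chart i) :
    FundamentalGroup.fromPath ((C.arc true (C.pt_mem none _) (hx true)).trans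
      (C.arc false (hx _) (C.pt_mem none _))) = C.gen (C.label x) := by
  have h := C.arc_eq_arc (C.pt_mem (C.label x)) hx (C.label_pt _)
  rw [gen, ← C.arc_trans true _ (C.pt_mem (C.label x) _) (hx _), h,
    Path.Homotopic.Quotient.trans_assoc, C.arc_trans]

theorem cross_mem (i j : Bool) {x : X} (hi : x ∈ C.chart i) (hj : x ∈ C.chart j) :
    FundamentalGroup.fromPath ((C.arc i (C.pt_mem none _) hi).trans
      (C.arc j hj (C.pt_mem none _))) ∈ C.genHom.range := by
  by_cases hij : i = j
  · subst hij
    rw [arc_trans, arc_self]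
    exact one_mem _
  have key (hx : ∀ i, x ∈ C.chart i) :
    FundamentalGroup.fromPath ((C.arc true (C.pt_mem none _) (hx true)).trans
      (C.arc false (hx _) (C.pt_mem none _))) ∈ C.genHom.range := by
    rw [C.cross_eq_gen hx]; exact C.gen_mem _
  have hx : ∀ i, x ∈ C.chart i := by
    intro k; cases i <;> cases j <;> cases k <;> simp_all
  cases i <;> cases j
  · simp at hij
  · refine (congrArg (· ∈ C.genHom.range) (eq_inv_of_mul_eq_one_right ?_)).mpr (inv_mem (key hx))
    rw [FundamentalGroup.mul_def, FundamentalGroup.one_def, FundamentalGroup.fromPath,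
      FundamentalGroup.fromPath, FundamentalGroup.fromArrow, FundamentalGroup.fromArrow,
      Path.Homotopic.Quotient.trans_assoc,
      ← Path.Homotopic.Quotient.trans_assoc (C.arc true _ _) (C.arc true _ _), C.arc_trans,
      C.arc_self, Path.Homotopic.Quotient.refl_trans, C.arc_trans, C.arc_self]
  · exact key hx
  · simp at hij

/-! ### Surjectivity -/

theorem genHom_surjective : Function.Surjective C.genHom := by
  have key : ∀ {x y : X} (p : Quotient x y), ∀ (i j : Bool) (hx : x ∈ C.chart i)
      (hy : y ∈ C.chart j), FundamentalGroup.fromPath ((C.arc i (C.pt_mem none _) hx).trans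
        (p.trans (C.arc j hy (C.pt_mem none _)))) ∈ C.genHom.range := by
    intro x y p
    induction p using C.path_induction with
    | @trans x y z p q hp hq =>
      intro i j hx hz
      obtain ⟨k, hk⟩ := C.cover y
      have h := mul_mem (hq k j hk hz) (hp i k hx hk)
      rw [FundamentalGroup.mul_def] at h
      convert h using 1
      simp only [Path.Homotopic.Quotient.trans_assoc]
      rw [← Path.Homotopic.Quotient.trans_assoc (C.arc k _ _) (C.arc k _ _), C.arc_trans,
        C.arc_self, Path.Homotopic.Quotient.refl_trans]
    | @chart k x y p hp =>
      intro i j hx hy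
      have hx' : x ∈ C.chart k := by simpa using hp 0
      have hy' : y ∈ C.chart k := by simpa using hp 1
      rw [C.mk_eq_arc k hx' hy' p hp]
      have h := mul_mem (C.cross_mem k j hy' hy) (C.cross_mem i k hx hx')
      rw [FundamentalGroup.mul_def] at h
      convert h using 1
      rw [← C.arc_trans k hx' (C.pt_mem none _) hy']
      simp only [Path.Homotopic.Quotient.trans_assoc]
  intro γ
  have h := key γ.toPath true true (C.pt_mem _ _) (C.pt_mem _ _)
  rw [arc_self] at h
  simpa using h

/-! ### The covering associated with a labelling of the overlap -/

section Covering

variable (F : Type*) [Group F] [TopologicalSpace F] [DiscreteTopology F] (g : Option ι → F)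

/-- The cocycle of the bundle, written as a coboundary: the change of coordinates from chart `i` to
chart `j` is left multiplication by `transition j * (transition i)⁻¹`. -/
def transition (i : Bool) (x : X) : F := if i then 1 else g (C.label x)

/-- The bundle with discrete fibre `F` obtained by gluing two trivial bundles over the charts by
left multiplication by `g k` over the component `k` of the overlap. -/
noncomputable def bundle : FiberBundleCore Bool X F where
  baseSet := C.chart
  isOpen_baseSet := C.isOpen_chart
  indexAt x := (C.cover x).choose
  mem_baseSet_at x := (C.cover x).choose_spec
  coordChange i j x v := C.transition F g j x * (C.transition F g i x)⁻¹ * v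
  coordChange_self i x _ v := by simp
  coordChange_comp i j k x _ v := by group
  continuousOn_coordChange i j := by
    by_cases hij : i = j
    · subst hij
      simpa using continuous_snd.continuousOn
    rintro ⟨x, v⟩ ⟨⟨hi, hj⟩, -⟩
    have hx : x ∈ C.chart true ∩ C.chart false := by cases i <;> cases j <;> simp_all
    have hl := (C.label_eventuallyEq x hx)
    have : (fun p : X × F ↦ C.transition F g j p.1 * (C.transition F g i p.1)⁻¹ * p.2) =ᶠ[𝓝 (x, v)]
        fun p ↦ C.transition F g j x * (C.transition F g i x)⁻¹ * p.2 := by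
      filter_upwards [continuous_fst.continuousAt.eventually hl] with p hp
      simp only [transition, hp]
    refine (ContinuousAt.congr ?_ this.symm).continuousWithinAt
    exact (continuous_of_discreteTopology.comp continuous_snd).continuousAt

theorem isCoveringMap_bundle : IsCoveringMap (C.bundle F g).proj :=
  IsFiberBundle.isCoveringMap fun x ↦
    ⟨(C.bundle F g).localTriv ((C.bundle F g).indexAt x), (C.bundle F g).mem_baseSet_at x⟩

/-- The point of the fibre over `x` with coordinate `v` in the chart `i`. -/
noncomputable def fiberPt (i : Bool) (x : X) (v : F) : (C.bundle F g).proj ⁻¹' {x} :=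
  ⟨⟨x, (C.bundle F g).coordChange i ((C.bundle F g).indexAt x) x v⟩, rfl⟩

theorem fiberPt_true_eq (x : X) (v : F) :
    C.fiberPt F g true x v = C.fiberPt F g false x (g (C.label x) * v) := by
  simp [fiberPt, bundle, transition]

theorem fiberPt_injective (i : Bool) (x : X) : Function.Injective (C.fiberPt F g i x) := by
  intro v w h
  have hvw : (C.bundle F g).coordChange i ((C.bundle F g).indexAt x) x v =
      (C.bundle F g).coordChange i ((C.bundle F g).indexAt x) x w :=
    Bundle.TotalSpace.mk_injective x (congrArg Subtype.val h)
  simpa [bundle] using hvw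

/-- Monodromy along a path inside a chart preserves the coordinate in that chart. -/
theorem monodromy_arc (i : Bool) {x y : X} (hx : x ∈ C.chart i) (hy : y ∈ C.chart i) (v : F) :
    (C.isCoveringMap_bundle F g).monodromy (C.arc i hx hy) (C.fiberPt F g i x v) =
      C.fiberPt F g i y v := by
  set J := ((C.isSimplyConnected_chart i).isPathConnected.joinedIn x hx y hy)
  let e := (C.bundle F g).localTriv i
  have hcont : Continuous fun t : I ↦ (C.fiberPt F g i (J.somePath t) v).1 := by
    have h1 : Continuous fun t : I ↦ e.toOpenPartialHomeomorph.symm (J.somePath t, v) := by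
      refine e.toOpenPartialHomeomorph.continuousOn_symm.comp_continuous (by fun_prop) fun t ↦ ?_
      exact (C.bundle F g).mem_localTrivAsPartialEquiv_target _ _ |>.mpr (J.somePath_mem t)
    -- by definition, the inverse of the local trivialization is `fiberPt`
    exact h1
  let Γ : Path (C.fiberPt F g i x v).1 (C.fiberPt F g i y v).1 :=
    { toFun := fun t ↦ (C.fiberPt F g i (J.somePath t) v).1
      continuous_toFun := hcont
      source' := by rw [J.somePath.source]
      target' := by rw [J.somePath.target] }
  refine (C.isCoveringMap_bundle F g).monodromy_eq_of_map_eq (.mk Γ) ?_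
  rfl

theorem monodromy_gen (hg : g none = 1) (k : Option ι) (v : F) :
    (C.isCoveringMap_bundle F g).monodromyPerm _ (C.gen k) (C.fiberPt F g true _ v) =
      C.fiberPt F g true _ (g k * v) := by
  rw [IsCoveringMap.coe_monodromyPerm, gen, FundamentalGroup.fromPath, FundamentalGroup.fromArrow,
    IsCoveringMap.monodromy_trans_apply, monodromy_arc, fiberPt_true_eq, monodromy_arc,
    fiberPt_true_eq, C.label_pt, C.label_pt, hg, one_mul]

end Covering

/-! ### Injectivity -/

theorem genHom_injective : Function.Injective C.genHom := by
  let : TopologicalSpace (FreeGroup ι) := ⊥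
  have : DiscreteTopology (FreeGroup ι) := ⟨rfl⟩
  let g : Option ι → FreeGroup ι := fun k ↦ k.elim 1 FreeGroup.of
  let M := (C.isCoveringMap_bundle (FreeGroup ι) g).monodromyPerm (C.pt none)
  have hof (k : ι) (v : FreeGroup ι) : M (C.genHom (FreeGroup.of k)) (C.fiberPt _ g true _ v) =
      C.fiberPt _ g true _ (FreeGroup.of k * v) := by
    simpa [genHom, g, M] using C.monodromy_gen (FreeGroup ι) g rfl (some k) v
  have key (w : FreeGroup ι) : ∀ v, M (C.genHom w) (C.fiberPt _ g true _ v) =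
      C.fiberPt _ g true _ (w * v) := by
    induction w using FreeGroup.induction_on with
    | C1 => intro v; rw [map_one, map_one, Equiv.Perm.one_apply, one_mul]
    | of k => exact hof k
    | inv_of k _ =>
      intro v
      rw [map_inv, map_inv, Equiv.Perm.inv_eq_iff_eq, hof, mul_inv_cancel_left]
    | mul a b ha hb =>
      intro v
      rw [map_mul, map_mul, Equiv.Perm.mul_apply, hb, ha, mul_assoc]
  rw [injective_iff_map_eq_one]
  intro w hw
  have h := key w 1
  rw [hw, map_one, Equiv.Perm.one_apply, mul_one] at h
  exact (C.fiberPt_injective _ g true _ h).symm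

/-- The fundamental group of a space with a `TwoChartCover` is free. -/
noncomputable def fundamentalGroupEquiv : FreeGroup ι ≃* FundamentalGroup X (C.pt none) :=
  MulEquiv.ofBijective C.genHom ⟨C.genHom_injective, C.genHom_surjective⟩

end TwoChartCover

/-! ### The twice punctured plane -/

/-- For `ε = 1` the plane slit along the closed vertical rays going down from `0` and `1`; for
`ε = -1` the rays go up. -/
def slitPlane₂ (ε : ℝ) : Set ℂ :=
  {z | (z.re = 0 → 0 < ε * z.im) ∧ (z.re = 1 → 0 < ε * z.im)}

theorem isOpen_slitPlane₂ (ε : ℝ) : IsOpen (slitPlane₂ ε) := by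
  have : slitPlane₂ ε = ({z : ℂ | z.re ≠ 0} ∪ {z : ℂ | 0 < ε * z.im}) ∩
      ({z : ℂ | z.re ≠ 1} ∪ {z : ℂ | 0 < ε * z.im}) := by
    ext z
    simp only [slitPlane₂, mem_ofPred_eq, mem_inter_iff, mem_union, imp_iff_not_or, ne_eq]
  have h0 : IsOpen {z : ℂ | z.re ≠ 0} := isOpen_ne_fun (by fun_prop) (by fun_prop)
  have h1 : IsOpen {z : ℂ | z.re ≠ 1} := isOpen_ne_fun (by fun_prop) (by fun_prop)
  have h2 : IsOpen {z : ℂ | 0 < ε * z.im} := isOpen_lt (by fun_prop) (by fun_prop)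
  rw [this]
  exact (h0.union h2).inter (h1.union h2)

theorem slitPlane₂_subset (ε : ℝ) : slitPlane₂ ε ⊆ {0, 1}ᶜ := by
  intro z hz h
  rcases h with rfl | rfl <;> simp [slitPlane₂] at hz

theorem contractibleSpace_slitPlane₂ {ε : ℝ} (hε : ε * ε = 1) :
    ContractibleSpace (slitPlane₂ ε) := by
  rw [contractible_iff_id_nullhomotopic]
  -- vertical push into the half-plane `0 < ε * im`, which is then contracted to `c`
  let f : C(slitPlane₂ ε, slitPlane₂ ε) :=
    ⟨fun z ↦ ⟨⟨z.1.re, ε * (1 + |z.1.im|)⟩, by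
      have : 0 < ε * (ε * (1 + |z.1.im|)) := by rw [← mul_assoc, hε]; positivity
      exact ⟨fun _ ↦ this, fun _ ↦ this⟩⟩, by
      refine Continuous.subtype_mk ?_ _
      exact Complex.equivRealProdCLM.symm.continuous.comp (f := fun z : slitPlane₂ ε ↦
        (z.1.re, ε * (1 + |z.1.im|))) (by fun_prop)⟩
  let c : slitPlane₂ ε := ⟨⟨0, ε⟩, by simp [slitPlane₂, hε]⟩
  refine ⟨c, ContinuousMap.Homotopic.trans (g := f) ⟨?_⟩ ⟨?_⟩⟩
  · refine ⟨⟨fun p ↦ ⟨(1 - (p.1 : ℝ) : ℂ) * p.2.1 + (p.1 : ℝ) * (f p.2).1, ?_⟩, ?_⟩, ?_, ?_⟩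
    · obtain ⟨⟨t, ht0, ht1⟩, ⟨z, hz⟩⟩ := p
      have key : 0 < ε * z.im → 0 < ε * ((1 - t) * z.im + t * (ε * (1 + |z.im|))) := by
        intro h
        have e : ε * ((1 - t) * z.im + t * (ε * (1 + |z.im|))) =
            (1 - t) * (ε * z.im) + t * ((ε * ε) * (1 + |z.im|)) := by ring
        rw [e, hε]
        rcases ht0.eq_or_lt with rfl | h0
        · simpa using h
        · have : 0 ≤ 1 - t := by linarith
          positivity
      have hre : (1 - t) * z.re + t * z.re = z.re := by ring
      refine ⟨fun h ↦ ?_, fun h ↦ ?_⟩ <;> simp [f, hre] at h ⊢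
      · exact key (hz.1 h)
      · exact key (hz.2 h)
    · fun_prop
    · intro z; ext1; simp
    · intro z; ext1; simp
  · refine ⟨⟨fun p ↦ ⟨(1 - (p.1 : ℝ) : ℂ) * (f p.2).1 + (p.1 : ℝ) * c.1, ?_⟩, ?_⟩, ?_, ?_⟩
    · obtain ⟨⟨t, ht0, ht1⟩, ⟨z, hz⟩⟩ := p
      have key : 0 < ε * ((1 - t) * (ε * (1 + |z.im|)) + t * ε) := by
        have e : ε * ((1 - t) * (ε * (1 + |z.im|)) + t * ε) =
            ε * ε * ((1 - t) * |z.im| + 1) := by ring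
        rw [e, hε]
        have : 0 ≤ 1 - t := by linarith
        positivity
      refine ⟨fun _ ↦ ?_, fun _ ↦ ?_⟩ <;> simpa [f, c] using key
    · fun_prop
    · intro z; ext1; simp
    · intro z; ext1; simp

/-- The component of `ℂ ∖ {re = 0 or re = 1}` containing `z`; the values on the two lines carry no
meaning. -/
noncomputable def stripLabel (z : ℂ) : Option (Fin 2) :=
  if z.re < 0 then none else if z.re < 1 then some 0 else some 1

theorem re_ne_of_mem {z : ℂ} (h : z ∈ slitPlane₂ 1 ∩ slitPlane₂ (-1)) : z.re ≠ 0 ∧ z.re ≠ 1 := by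
  obtain ⟨⟨h0, h1⟩, h2, h3⟩ := h
  refine ⟨fun h ↦ ?_, fun h ↦ ?_⟩
  · have := h0 h; have := h2 h; linarith
  · have := h1 h; have := h3 h; linarith

theorem stripLabel_eventuallyEq {z : ℂ} (h0 : z.re ≠ 0) (h1 : z.re ≠ 1) :
    ∀ᶠ w in 𝓝 z, stripLabel w = stripLabel z := by
  have hc := Complex.continuous_re.continuousAt (x := z)
  have key (a : ℝ) (h : z.re ≠ a) : ∀ᶠ w : ℂ in 𝓝 z, (w.re < a ↔ z.re < a) := by
    rcases h.lt_or_gt with h | h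
    · filter_upwards [hc.eventually_lt_const h] with w hw
      simp [hw, h]
    · filter_upwards [hc.eventually_const_lt h] with w hw
      exact iff_of_false hw.not_gt h.not_gt
  filter_upwards [key 0 h0, key 1 h1] with w hw0 hw1
  simp only [stripLabel, hw0, hw1]

theorem re_segment_ne {a b t : ℝ} (ht0 : 0 ≤ t) (ht1 : t ≤ 1) {c : ℝ} (ha : a ≠ c) (hb : b ≠ c)
    (hab : a < c ↔ b < c) : (1 - t) * a + t * b ≠ c := by
  rcases ha.lt_or_gt with h | h
  · have hb := hab.mp h
    apply ne_of_lt
    have : (1 - t) * a + t * b < (1 - t) * c + t * c := by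
      rcases ht0.eq_or_lt with rfl | h0
      · simpa using h
      · have := mul_lt_mul_of_pos_left hb h0
        have := mul_le_mul_of_nonneg_left h.le (sub_nonneg.mpr ht1)
        linarith
    linarith
  · have hb : c < b := lt_of_le_of_ne (not_lt.mp fun hb ↦ (hab.mpr hb).not_gt h) hb.symm
    apply ne_of_gt
    have : (1 - t) * c + t * c < (1 - t) * a + t * b := by
      rcases ht0.eq_or_lt with rfl | h0
      · simpa using h
      · have := mul_lt_mul_of_pos_left hb h0
        have := mul_le_mul_of_nonneg_left h.le (sub_nonneg.mpr ht1)
        linarith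
    linarith

theorem lt_iff_of_stripLabel_eq {z w : ℂ} (h : stripLabel z = stripLabel w) :
    (z.re < 0 ↔ w.re < 0) ∧ (z.re < 1 ↔ w.re < 1) := by
  unfold stripLabel at h
  split_ifs at h <;> grind

theorem mem_slitPlane₂_of_re_ne {z : ℂ} (h0 : z.re ≠ 0) (h1 : z.re ≠ 1) (ε : ℝ) :
    z ∈ slitPlane₂ ε := ⟨fun h ↦ absurd h h0, fun h ↦ absurd h h1⟩

/-- A point in each of the three strips. -/
noncomputable def stripPt : Option (Fin 2) → ℂ
  | none => -1
  | some 0 => 1 / 2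
  | some 1 => 2

theorem stripPt_mem (k : Option (Fin 2)) (ε : ℝ) : stripPt k ∈ slitPlane₂ ε := by
  apply mem_slitPlane₂_of_re_ne <;> rcases k with _ | k <;> (try fin_cases k) <;>
    norm_num [stripPt]

theorem stripLabel_stripPt (k : Option (Fin 2)) : stripLabel (stripPt k) = k := by
  rcases k with _ | k <;> (try fin_cases k) <;> norm_num [stripPt, stripLabel]

/-- The cover of `ℂ ∖ {0, 1}` by the two slit planes, meeting in three strips. -/
noncomputable def slitCover : TwoChartCover (↥({0, 1}ᶜ : Set ℂ)) (Fin 2) where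
  chart i := Subtype.val ⁻¹' slitPlane₂ (if i then 1 else -1)
  isOpen_chart i := (isOpen_slitPlane₂ _).preimage continuous_subtype_val
  isSimplyConnected_chart i := by
    rw [← IsEmbedding.subtypeVal.isSimplyConnected_image, Subtype.image_preimage_coe,
      inter_eq_right.mpr (slitPlane₂_subset _)]
    have := contractibleSpace_slitPlane₂ (ε := if i then 1 else -1) (by cases i <;> simp)
    exact SimplyConnectedSpace.ofContractible _
  cover := by
    rintro ⟨z, hz⟩
    have hz' : ¬ (z = 0 ∨ z = 1) := hz
    have him (h : z.re = 0 ∨ z.re = 1) : z.im ≠ 0 := by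
      intro h'
      exact hz' (h.imp (fun h ↦ Complex.ext h h') fun h ↦ Complex.ext h h')
    by_cases h : 0 < z.im
    · exact ⟨true, by simp [slitPlane₂, h]⟩
    · refine ⟨false, fun h0 ↦ ?_, fun h1 ↦ ?_⟩
      · simpa using lt_of_le_of_ne (not_lt.mp h) (him (.inl h0))
      · simpa using lt_of_le_of_ne (not_lt.mp h) (him (.inr h1))
  label z := stripLabel z
  label_eventuallyEq := by
    rintro z hz
    obtain ⟨h0, h1⟩ := re_ne_of_mem hz
    exact continuous_subtype_val.continuousAt.eventually (stripLabel_eventuallyEq h0 h1)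
  joinedIn := by
    rintro ⟨z, hz⟩ hz' ⟨w, hw⟩ hw' h
    obtain ⟨hz0, hz1⟩ := re_ne_of_mem hz'
    obtain ⟨hw0, hw1⟩ := re_ne_of_mem hw'
    obtain ⟨h0, h1⟩ := lt_iff_of_stripLabel_eq h
    have key (t : I) (ε : ℝ) : (1 - (t : ℝ) : ℂ) * z + (t : ℝ) * w ∈ slitPlane₂ ε := by
      apply mem_slitPlane₂_of_re_ne
      · simpa using re_segment_ne t.2.1 t.2.2 hz0 hw0 h0
      · simpa using re_segment_ne t.2.1 t.2.2 hz1 hw1 h1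
    refine ⟨⟨⟨fun t ↦ ⟨(1 - (t : ℝ) : ℂ) * z + (t : ℝ) * w, slitPlane₂_subset _ (key t 1)⟩, ?_⟩,
      ?_, ?_⟩, fun t ↦ ⟨key t _, key t _⟩⟩
    · fun_prop
    · simp
    · simp
  pt k := ⟨stripPt k, slitPlane₂_subset 1 (stripPt_mem k 1)⟩
  pt_mem k i := stripPt_mem k _
  label_pt k := stripLabel_stripPt k

/-- the fundamental group of `ℂ ∖ {0, 1}`, at any basepoint, is
isomorphic to the free group on two generators. -/
theorem fundamentalGroup_complement_two_points_free
    (x : ↥({0, 1}ᶜ : Set ℂ)) :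
    Nonempty (FundamentalGroup (↥({0, 1}ᶜ : Set ℂ)) x ≃* FreeGroup (Fin 2)) := by
  have : PathConnectedSpace (↥({0, 1}ᶜ : Set ℂ)) :=
    isPathConnected_iff_pathConnectedSpace.mp <|
      (Set.toFinite {0, 1}).countable.isPathConnected_compl_of_one_lt_rank (by simp)
  exact ⟨(FundamentalGroup.fundamentalGroupMulEquivOfPathConnected x _).trans
    slitCover.fundamentalGroupEquiv.symm⟩
end

section
/- For τ in the upper half-plane ℍ, the series defining g₂(τ) := 60·Σ_{(m,n)∈ℤ²∖{(0,0)}} (m+nτ)^(−4) and g₃(τ) := 140·Σ_{(m,n)∈ℤ²∖{(0,0)}} (m+nτ)^(−6) converge absolutely, and the function Δ(τ) := g₂(τ)³ − 27·g₃(τ)² is a cusp form of weight 12 for SL(2,ℤ): it is holomorphic on ℍ, satisfies Δ((aτ+b)/(cτ+d)) = (cτ+d)^12 · Δ(τ) for every (a b; c d) ∈ SL(2,ℤ) and τ ∈ ℍ, and Δ(τ) → 0 as Im τ → ∞. -/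
/-!
The full lattice sum of weight `k` equals `2 ζ(k) E_k`, where `E_k` is the normalised Eisenstein
series of level one. With `ζ(4) = π⁴ / 90` and `ζ(6) = π⁶ / 945` this gives
`g₂ = (4 / 3) π⁴ E₄` and `g₃ = (8 / 27) π⁶ E₆`, hence
`g₂³ - 27 g₃² = (64 / 27) π¹² (E₄³ - E₆²) = (2π)¹² η²⁴`
by the identity `E₄³ - E₆² = 1728 η²⁴` (`discriminant_eq_E₄_cube_sub_E₆_sq`). Holomorphy,
modularity and vanishing at the cusp are then those of the cusp form `η²⁴`
(`CuspForm.discriminant`); the link is `Δdisc_eq_discriminant`. Absolute convergence is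
that of the Eisenstein summands, reindexed.
-/

open Filter

/-- The Eisenstein series `g₂(τ) = 60 Σ'_{(m,n)≠(0,0)} (m+nτ)⁻⁴`. -/
noncomputable def g₂ (τ : ℂ) : ℂ :=
  60 * ∑' p : {p : ℤ × ℤ // p ≠ 0}, ((p.1.1 : ℂ) + (p.1.2 : ℂ) * τ) ^ (-4 : ℤ)

/-- The Eisenstein series `g₃(τ) = 140 Σ'_{(m,n)≠(0,0)} (m+nτ)⁻⁶`. -/
noncomputable def g₃ (τ : ℂ) : ℂ :=
  140 * ∑' p : {p : ℤ × ℤ // p ≠ 0}, ((p.1.1 : ℂ) + (p.1.2 : ℂ) * τ) ^ (-6 : ℤ)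

/-- The modular discriminant `Δ(τ) = g₂(τ)³ − 27 g₃(τ)²`. -/
noncomputable def Δdisc (τ : ℂ) : ℂ := g₂ τ ^ 3 - 27 * g₃ τ ^ 2

open UpperHalfPlane EisensteinSeries
open scoped MatrixGroups Real

/-- The lattice point `(m, n)`, standing for `m + n τ`, corresponds to the vector `![n, m]` that
indexes the Eisenstein summand `(n τ + m)⁻ᵏ`. -/
def latticeEquiv : ℤ × ℤ ≃ (Fin 2 → ℤ) :=
  (Equiv.prodComm ℤ ℤ).trans (finTwoArrowEquiv ℤ).symm

lemma eisSummand_latticeEquiv (k : ℕ) (p : ℤ × ℤ) (z : ℍ) :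
    eisSummand k (latticeEquiv p) z = ((p.1 : ℂ) + (p.2 : ℂ) * z) ^ (-(k : ℤ)) := by
  simp [eisSummand, latticeEquiv, add_comm]

lemma summable_norm_lattice {k : ℕ} (hk : 3 ≤ k) (z : ℍ) :
    Summable (fun p : {p : ℤ × ℤ // p ≠ 0} =>
      ‖((p.1.1 : ℂ) + (p.1.2 : ℂ) * z) ^ (-(k : ℤ))‖) := by
  have h := latticeEquiv.summable_iff.mpr
    (summable_norm_eisSummand (k := (k : ℤ)) (mod_cast hk) z)
  refine (h.subtype {p | p ≠ 0}).congr fun p => ?_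
  simp only [Function.comp_apply, eisSummand_latticeEquiv]

/-- Removing the origin from the index set does not change the sum, as `0 ^ (-k) = 0` for
`k ≠ 0`. -/
lemma tsum_lattice {k : ℕ} (hk : 3 ≤ k) (z : ℍ) :
    ∑' p : {p : ℤ × ℤ // p ≠ 0}, ((p.1.1 : ℂ) + (p.1.2 : ℂ) * z) ^ (-(k : ℤ)) =
      2 * riemannZeta k * ModularForm.E hk z := by
  have h1 : ∑' p : {p : ℤ × ℤ // p ≠ 0}, ((p.1.1 : ℂ) + (p.1.2 : ℂ) * z) ^ (-(k : ℤ)) =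
      ∑' p : ℤ × ℤ, ((p.1 : ℂ) + (p.2 : ℂ) * z) ^ (-(k : ℤ)) := by
    refine tsum_subtype_eq_of_support_subset (s := {p : ℤ × ℤ | p ≠ 0})
      (f := fun p : ℤ × ℤ => ((p.1 : ℂ) + (p.2 : ℂ) * z) ^ (-(k : ℤ))) ?_
    rintro p hp rfl
    have hk0 : k ≠ 0 := by lia
    simp [hk0] at hp
  have h2 : ModularForm.E hk z = (1 / 2 : ℂ) * eisensteinSeries (N := 1) 0 k z := rfl
  simp_rw [h1, ← eisSummand_latticeEquiv]
  rw [latticeEquiv.tsum_eq (fun v => eisSummand k v z),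
    tsum_eisSummand_eq_riemannZeta_mul_eisensteinSeries hk, h2]
  ring

lemma riemannZeta_six : riemannZeta 6 = (π : ℂ) ^ 6 / 945 := by
  have h := riemannZeta_two_mul_nat (k := 3) (by norm_num)
  have hb : bernoulli 6 = 1 / 42 := by
    have h5 : bernoulli' 5 = 0 := bernoulli'_eq_zero_of_odd (by decide) (by norm_num)
    have c2 : Nat.choose 6 2 = 15 := by decide
    have c3 : Nat.choose 6 4 = 15 := by decide
    rw [bernoulli_eq_bernoulli'_of_ne_one (by norm_num), bernoulli'_def]
    norm_num [Finset.sum_range_succ, h5, c2, c3]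
  norm_num [hb, Nat.factorial] at h
  rw [h]
  ring

lemma g₂_eq (z : ℍ) : g₂ z = 4 / 3 * (π : ℂ) ^ 4 * ModularForm.E₄ z := by
  have h := tsum_lattice (k := 4) (by norm_num) z
  rw [show ((4 : ℕ) : ℂ) = 4 by norm_num, riemannZeta_four] at h
  rw [g₂]
  -- The exponents `-4` and `-((4 : ℕ) : ℤ)` agree only up to unfolding the cast.
  erw [h]
  ring

lemma g₃_eq (z : ℍ) : g₃ z = 8 / 27 * (π : ℂ) ^ 6 * ModularForm.E₆ z := by
  have h := tsum_lattice (k := 6) (by norm_num) z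
  rw [show ((6 : ℕ) : ℂ) = 6 by norm_num, riemannZeta_six] at h
  rw [g₃]
  erw [h]
  ring

lemma Δdisc_eq_discriminant (z : ℍ) :
    Δdisc z = (2 * (π : ℂ)) ^ 12 * CuspForm.discriminant z := by
  rw [Δdisc, g₂_eq, g₃_eq, CuspForm.coe_discriminant,
    ModularForm.discriminant_eq_E₄_cube_sub_E₆_sq]
  ring

lemma Δdisc_eq_discriminant_ofComplex {τ : ℂ} (hτ : 0 < τ.im) :
    Δdisc τ = (2 * (π : ℂ)) ^ 12 * CuspForm.discriminant (ofComplex τ) := by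
  rw [← Δdisc_eq_discriminant, ofComplex_apply_of_im_pos hτ]


/-- the series defining `g₂` and `g₃` converge absolutely on the upper
half-plane, and `Δ = g₂³ − 27 g₃²` is a cusp form of weight 12 for `SL(2,ℤ)`:
holomorphic on `ℍ`, transforming with automorphy factor `(cτ+d)¹²`, and tending to `0`
as `Im τ → ∞`. -/
theorem discriminant_is_cusp_form_weight_twelve :
    (∀ τ : ℂ, 0 < τ.im →
      Summable (fun p : {p : ℤ × ℤ // p ≠ 0} =>
        ‖((p.1.1 : ℂ) + (p.1.2 : ℂ) * τ) ^ (-4 : ℤ)‖) ∧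
      Summable (fun p : {p : ℤ × ℤ // p ≠ 0} =>
        ‖((p.1.1 : ℂ) + (p.1.2 : ℂ) * τ) ^ (-6 : ℤ)‖)) ∧
    DifferentiableOn ℂ Δdisc {z : ℂ | 0 < z.im} ∧
    (∀ A : Matrix.SpecialLinearGroup (Fin 2) ℤ, ∀ τ : ℂ, 0 < τ.im →
      Δdisc ((((A : Matrix (Fin 2) (Fin 2) ℤ) 0 0 : ℂ) * τ + ((A : Matrix (Fin 2) (Fin 2) ℤ) 0 1 : ℂ)) /
          (((A : Matrix (Fin 2) (Fin 2) ℤ) 1 0 : ℂ) * τ + ((A : Matrix (Fin 2) (Fin 2) ℤ) 1 1 : ℂ))) =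
        (((A : Matrix (Fin 2) (Fin 2) ℤ) 1 0 : ℂ) * τ + ((A : Matrix (Fin 2) (Fin 2) ℤ) 1 1 : ℂ)) ^ 12 *
          Δdisc τ) ∧
    Tendsto Δdisc (Filter.comap Complex.im Filter.atTop) (nhds 0) := by
  refine ⟨fun τ hτ => ⟨?_, ?_⟩, ?_, ?_, ?_⟩
  · exact summable_norm_lattice (k := 4) (by norm_num) ⟨τ, hτ⟩
  · exact summable_norm_lattice (k := 6) (by norm_num) ⟨τ, hτ⟩
  · exact ((UpperHalfPlane.mdifferentiable_iff.mp CuspForm.discriminant.holo').const_mul _).congr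
      fun τ hτ => Δdisc_eq_discriminant_ofComplex hτ
  · intro A τ hτ
    set z : ℍ := ⟨τ, hτ⟩
    have hmem : (Matrix.SpecialLinearGroup.mapGL ℝ A) ∈ 𝒮ℒ := ⟨A, rfl⟩
    have h := SlashInvariantForm.slash_action_eqn' CuspForm.discriminant hmem z
    have hz : ((A • z : ℍ) : ℂ) = ((A 0 0 : ℂ) * τ + (A 0 1 : ℂ)) /
        ((A 1 0 : ℂ) * τ + (A 1 1 : ℂ)) := by
      simp [UpperHalfPlane.specialLinearGroup_apply, z]
    have hA : CuspForm.discriminant (A • z) =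
        ((A 1 0 : ℂ) * τ + (A 1 1 : ℂ)) ^ 12 * CuspForm.discriminant z := by
      have h' : CuspForm.discriminant (A • z) = _ := h
      rw [h']
      simp [z]
    rw [← hz, Δdisc_eq_discriminant, hA, show τ = (z : ℂ) from rfl, Δdisc_eq_discriminant]
    ring
  · have h0 : Tendsto CuspForm.discriminant atImInfty (nhds 0) :=
      CuspFormClass.zero_at_infty CuspForm.discriminant
    have h := (h0.comp tendsto_comap_im_ofComplex).const_mul ((2 * (π : ℂ)) ^ 12)
    rw [mul_zero] at h
    refine h.congr' ?_
    filter_upwards [preimage_mem_comap (Ioi_mem_atTop 0)] with τ hτ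
    exact (Δdisc_eq_discriminant_ofComplex hτ).symm
end

section
/- For every τ in the upper half-plane ℍ, the discriminant Δ(τ) := g₂(τ)³ − 27·g₃(τ)² is nonzero, where g₂(τ) := 60·Σ_{(m,n)∈ℤ²∖{(0,0)}} (m+nτ)^(−4) and g₃(τ) := 140·Σ_{(m,n)∈ℤ²∖{(0,0)}} (m+nτ)^(−6). -/
open UpperHalfPlane EisensteinSeries ModularForm in
/-- The classical `G_k = 2 ζ(k) E_k`: each nonzero vector is a unique positive multiple of a
primitive one, and `E_k` is half the sum over primitive vectors. -/
lemma tsum_nonzero_eq_zeta_mul_E {k : ℕ} (hk : 3 ≤ k) (z : ℍ) :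
    ∑' p : {p : ℤ × ℤ // p ≠ 0}, ((p.1.1 : ℂ) + (p.1.2 : ℂ) * (z : ℂ)) ^ (-(k : ℤ)) =
      2 * riemannZeta k * E hk z := by
  have hE : E hk z = (1 / 2 : ℂ) * eisensteinSeries (N := 1) 0 k z := rfl
  have hG := tsum_eisSummand_eq_riemannZeta_mul_eisensteinSeries hk z
  rw [hE, show 2 * riemannZeta k * ((1 / 2 : ℂ) * eisensteinSeries (N := 1) 0 k z) =
    riemannZeta k * eisensteinSeries (N := 1) 0 k z by ring, ← hG,
    ← (finTwoArrowEquiv ℤ).symm.tsum_eq, ← (Equiv.prodComm ℤ ℤ).tsum_eq]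
  -- The origin contributes `0 ^ (-k) = 0` to the unrestricted sum.
  refine (tsum_subtype_eq_of_support_subset (s := {p : ℤ × ℤ | p ≠ 0})
    (f := fun p : ℤ × ℤ ↦ ((p.1 : ℂ) + (p.2 : ℂ) * (z : ℂ)) ^ (-(k : ℤ))) ?_).trans ?_
  · rintro p hp rfl
    exact hp (by simp [show k ≠ 0 by omega])
  · refine tsum_congr fun p ↦ ?_
    simp [eisSummand, add_comm]

lemma riemannZeta_six_eq : riemannZeta 6 = (Real.pi : ℂ) ^ 6 / 945 := by
  have h := riemannZeta_two_mul_nat (k := 3) (by norm_num)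
  have h5 : bernoulli' 5 = 0 := bernoulli'_eq_zero_of_odd (by decide) (by norm_num)
  have hb : bernoulli 6 = 1 / 42 := by
    rw [bernoulli_eq_bernoulli'_of_ne_one (by norm_num), bernoulli'_def]
    norm_num [Finset.sum_range_succ, Nat.choose, h5]
  norm_num [hb, Nat.factorial] at h
  rw [h]; ring

/-- the discriminant `Δ(τ) = g₂(τ)³ − 27 g₃(τ)²` is nonzero for every
`τ` in the upper half-plane. -/
theorem discriminant_ne_zero (τ : ℂ) (hτ : 0 < τ.im) :
    g₂ τ ^ 3 - 27 * g₃ τ ^ 2 ≠ 0 := by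
  let z : UpperHalfPlane := ⟨τ, hτ⟩
  have h2 : g₂ τ = 4 * (Real.pi : ℂ) ^ 4 / 3 * ModularForm.E₄ z := by
    have h := tsum_nonzero_eq_zeta_mul_E (k := 4) (by norm_num) z
    have h4 := riemannZeta_four
    push_cast at h
    rw [h4] at h
    rw [g₂]
    refine (congrArg (60 * ·) h).trans ?_
    ring
  have h3 : g₃ τ = 8 * (Real.pi : ℂ) ^ 6 / 27 * ModularForm.E₆ z := by
    have h := tsum_nonzero_eq_zeta_mul_E (k := 6) (by norm_num) z
    push_cast at h
    rw [riemannZeta_six_eq] at h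
    rw [g₃]
    refine (congrArg (140 * ·) h).trans ?_
    ring
  have hΔ := ModularForm.discriminant_eq_E₄_cube_sub_E₆_sq z
  have key : g₂ τ ^ 3 - 27 * g₃ τ ^ 2 =
      4096 * (Real.pi : ℂ) ^ 12 * ModularForm.discriminant z := by
    rw [h2, h3, hΔ]
    ring
  rw [key]
  exact mul_ne_zero (mul_ne_zero (by norm_num)
    (pow_ne_zero _ (by exact_mod_cast Real.pi_ne_zero))) (ModularForm.discriminant_ne_zero z)
end
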